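/- arXiv:1705.03803 — 2 statements merged into one kernel-verified Lean document; each statement's English description precedes it below -/
import Mathlib

section
/- Let A be maximally monotone on a real Hilbert space H with S = A^{-1}(0) ≠ ∅, α > 2, λ(t) = (1+ε)t²/α² with ε > 2/(α−2), and let x be a C² solution of ẍ(t) + (α/t)ẋ(t) + A_{λ(t)}(x(t)) = 0 on [t₀, ∞), t₀ > 0. Then the trajectory x is bounded, sup_{t≥t₀} t‖ẋ(t)‖ < ∞, sup_{t≥t₀} t²‖ẍ(t)‖ < ∞, and ∫_{t₀}^∞ t‖ẋ(t)‖² dt < ∞. -/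
open scoped RealInnerProductSpace

variable {H : Type*} [NormedAddCommGroup H] [InnerProductSpace ℝ H] [CompleteSpace H]

/-- A set-valued operator `A : H → 2^H` is monotone. -/
def MonotoneOp (A : H → Set H) : Prop :=
  ∀ ⦃x y u v : H⦄, u ∈ A x → v ∈ A y → 0 ≤ ⟪u - v, x - y⟫

/-- A set-valued operator is maximally monotone: monotone and with no proper
monotone extension. -/
def MaximallyMonotone (A : H → Set H) : Prop :=
  MonotoneOp A ∧
    ∀ x u : H, (∀ y v : H, v ∈ A y → 0 ≤ ⟪u - v, x - y⟫) → u ∈ A x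

/-- `J` is the resolvent `(I + lam A)⁻¹` of `A` with index `lam`:
for every `x`, `J x + lam • A (J x) ∋ x`, i.e. `lam⁻¹ • (x - J x) ∈ A (J x)`. -/
def IsResolvent (A : H → Set H) (lam : ℝ) (J : H → H) : Prop :=
  ∀ x : H, lam⁻¹ • (x - J x) ∈ A (J x)

open Set MeasureTheory Filter

/-!
Put `y = x - z` with `0 ∈ A z`, `u = A_λ x` and `β = (1 + ε) / α`. The energy
`⟪t ẏ, y⟫ + (α - 1) / 2 ‖y‖² + β ‖t ẏ‖²` is a positive definite quadratic form in `(y, t ẏ)`,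
and cocoercivity of `A_λ` bounds its derivative by `-(β (α - 2) - 1) t ‖ẏ‖²`, where the bracket is
positive because `ε > 2 / (α - 2)`. Hence `y` and `t ẏ` are bounded and `t ‖ẏ‖²` is integrable.
Cocoercivity also gives `λ ‖u‖ ≤ ‖y‖`, so `t² u` is bounded, and the equation bounds `t² ÿ`.
-/

section Preliminaries

variable {E : Type*} [NormedAddCommGroup E] [InnerProductSpace ℝ E]

theorem mul_norm_le_norm_of_mul_norm_sq_le_inner {c : ℝ} {u y : E}
    (h : c * ‖u‖ ^ 2 ≤ ⟪u, y⟫) : c * ‖u‖ ≤ ‖y‖ := by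
  rcases (norm_nonneg u).eq_or_lt with hu | hu
  · rw [← hu, mul_zero]
    exact norm_nonneg y
  · refine le_of_mul_le_mul_left ?_ hu
    calc ‖u‖ * (c * ‖u‖) = c * ‖u‖ ^ 2 := by ring
      _ ≤ ‖u‖ * ‖y‖ := h.trans (real_inner_le_norm u y)

theorem integrableOn_Ici_of_le_neg_deriv {f f' g : ℝ → ℝ} {a m : ℝ}
    (hf : ∀ t, a ≤ t → HasDerivAt f (f' t) t) (hm : ∀ t, a ≤ t → m ≤ f t)
    (hg : LocallyIntegrableOn g (Ici a)) (hg_nonneg : ∀ t, a ≤ t → 0 ≤ g t)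
    (hgf' : ∀ t, a ≤ t → g t ≤ -f' t) : IntegrableOn g (Ici a) := by
  have hg_Icc (T : ℝ) : IntegrableOn g (Icc a T) :=
    hg.integrableOn_compact_subset Icc_subset_Ici_self isCompact_Icc
  rw [integrableOn_Ici_iff_integrableOn_Ioi]
  refine integrableOn_Ioi_of_intervalIntegral_norm_bounded (l := atTop) (b := id) (f a - m) a
    (fun T => (hg_Icc T).mono_set Ioc_subset_Icc_self) tendsto_id ?_
  filter_upwards [eventually_ge_atTop a] with T hT
  calc ∫ t in a..T, ‖g t‖ = ∫ t in a..T, g t := by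
        refine intervalIntegral.integral_congr fun t ht => Real.norm_of_nonneg (hg_nonneg t ?_)
        rw [uIcc_of_le hT] at ht
        exact ht.1
    _ ≤ -f T - -f a :=
        intervalIntegral.integral_le_sub_of_hasDeriv_right_of_le hT
          (fun t ht => (hf t ht.1).neg.continuousAt.continuousWithinAt)
          (fun t ht => (hf t ht.1.le).neg.hasDerivWithinAt) (hg_Icc T)
          (fun t ht => hgf' t ht.1.le)
    _ ≤ f a - m := by linarith [hm T hT]

/-- The Yosida regularization `A_lam = lam⁻¹ (I - J)` of an operator, encoded through its
resolvent `J` of index `lam`. -/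
noncomputable def yosida (lam : ℝ) (J : E → E) (p : E) : E :=
  lam⁻¹ • (p - J p)

theorem MonotoneOp.mul_norm_sq_yosida_le_inner {A : E → Set E} (hA : MonotoneOp A) {z : E}
    (hz : 0 ∈ A z) {lam : ℝ} (hlam : lam ≠ 0) {J : E → E} (hJ : IsResolvent A lam J) (p : E) :
    lam * ‖yosida lam J p‖ ^ 2 ≤ ⟪yosida lam J p, p - z⟫ := by
  have hmono : 0 ≤ ⟪yosida lam J p - 0, J p - z⟫ := hA (hJ p) hz
  have hJp : J p - z = (p - z) - lam • yosida lam J p := by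
    rw [yosida, smul_inv_smul₀ hlam]
    abel
  rw [sub_zero, hJp, inner_sub_right, real_inner_smul_right, real_inner_self_eq_norm_sq] at hmono
  linarith

end Preliminaries

/-- The motion `y` on `[t₀, ∞)`, with velocity `v` and acceleration `a`, under the damping `α / t`
and the restoring force `-u`, where `u` is cocoercive relative to the origin with modulus
`β t² / α`. -/
structure IsCocoerciveMotion {E : Type*} [NormedAddCommGroup E] [InnerProductSpace ℝ E]
    (α β t₀ : ℝ) (y v a u : ℝ → E) : Prop where
  start_pos : 0 < t₀
  damping_pos : 0 < α
  modulus_pos : 0 < β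
  hasDerivAt_position : ∀ t, t₀ ≤ t → HasDerivAt y (v t) t
  hasDerivAt_velocity : ∀ t, t₀ ≤ t → HasDerivAt v (a t) t
  equation : ∀ t, t₀ ≤ t → a t + (α / t) • v t + u t = 0
  cocoercive : ∀ t, t₀ ≤ t → β * t ^ 2 / α * ‖u t‖ ^ 2 ≤ ⟪u t, y t⟫

section Energy

variable {E : Type*} [NormedAddCommGroup E] [InnerProductSpace ℝ E]
  {α β t₀ t : ℝ} {y v a u : ℝ → E}

/-- The Lyapunov function of a motion `y` with velocity `v`. With `h = ‖y‖² / 2` it is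
`t ḣ + (α - 1) h + β t² ‖v‖²`. -/
noncomputable def motionEnergy (α β : ℝ) (y v : ℝ → E) (t : ℝ) : ℝ :=
  ⟪t • v t, y t⟫ + (α - 1) / 2 * ‖y t‖ ^ 2 + β * ‖t • v t‖ ^ 2

theorem le_motionEnergy (hβ : 0 < β) (hαβ : 1 ≤ β * (α - 2)) (y v : ℝ → E) (t : ℝ) :
    ‖y t‖ ^ 2 / 2 + β / 2 * ‖t • v t‖ ^ 2 ≤ motionEnergy α β y v t := by
  have hsquare : ‖β • t • v t + y t‖ ^ 2 =
      β ^ 2 * ‖t • v t‖ ^ 2 + 2 * (β * ⟪t • v t, y t⟫) + ‖y t‖ ^ 2 := by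
    rw [norm_add_sq_real, norm_smul β, mul_pow, Real.norm_eq_abs, sq_abs, real_inner_smul_left]
  have hgap : 2 * β * (motionEnergy α β y v t - (‖y t‖ ^ 2 / 2 + β / 2 * ‖t • v t‖ ^ 2)) =
      ‖β • t • v t + y t‖ ^ 2 + (β * (α - 2) - 1) * ‖y t‖ ^ 2 := by
    rw [hsquare, motionEnergy]
    ring
  have hgap_nonneg : 0 ≤ ‖β • t • v t + y t‖ ^ 2 + (β * (α - 2) - 1) * ‖y t‖ ^ 2 :=
    add_nonneg (sq_nonneg _) (mul_nonneg (sub_nonneg.2 hαβ) (sq_nonneg _))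
  rw [← hgap] at hgap_nonneg
  exact sub_nonneg.1 (nonneg_of_mul_nonneg_right hgap_nonneg (by positivity))

namespace IsCocoerciveMotion

theorem smul_acceleration (h : IsCocoerciveMotion α β t₀ y v a u) (ht : t₀ ≤ t) :
    t • a t = -(α • v t) - t • u t := by
  have hode := congrArg (t • ·) (h.equation t ht)
  have ht0 : t ≠ 0 := (h.start_pos.trans_le ht).ne'
  simp only [smul_add, smul_smul, mul_div_cancel₀ α ht0, smul_zero] at hode
  rw [add_assoc] at hode
  rw [eq_neg_of_add_eq_zero_left hode, neg_add']

theorem hasDerivAt_motionEnergy (h : IsCocoerciveMotion α β t₀ y v a u) (ht : t₀ ≤ t) :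
    HasDerivAt (motionEnergy α β y v)
      (-(t * ⟪u t, y t⟫) + (1 - 2 * β * (α - 1)) * (t * ‖v t‖ ^ 2)
        - 2 * β * t ^ 2 * ⟪u t, v t⟫) t := by
  have hy := h.hasDerivAt_position t ht
  have hw : HasDerivAt (fun s => s • v s) ((1 - α) • v t - t • u t) t := by
    refine ((hasDerivAt_id' t).smul (h.hasDerivAt_velocity t ht)).congr_deriv ?_
    rw [h.smul_acceleration ht]
    module
  refine (((hw.inner ℝ hy).add (hy.norm_sq.const_mul ((α - 1) / 2))).add
    (hw.norm_sq.const_mul β)).congr_deriv ?_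
  simp only [inner_sub_left, inner_sub_right, real_inner_smul_left, real_inner_smul_right,
    real_inner_self_eq_norm_sq, real_inner_comm (v t) (y t), real_inner_comm (u t) (v t)]
  ring

/-- Cocoercivity completes the square `‖t u + α v‖²` in the derivative of the energy. -/
theorem deriv_motionEnergy_le (h : IsCocoerciveMotion α β t₀ y v a u) (ht : t₀ ≤ t) :
    deriv (motionEnergy α β y v) t ≤ -((β * (α - 2) - 1) * (t * ‖v t‖ ^ 2)) := by
  have hα := h.damping_pos
  have ht0 : 0 < t := h.start_pos.trans_le ht
  have hsquare : ‖t • u t + α • v t‖ ^ 2 =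
      t ^ 2 * ‖u t‖ ^ 2 + 2 * (t * α * ⟪u t, v t⟫) + α ^ 2 * ‖v t‖ ^ 2 := by
    rw [norm_add_sq_real, norm_smul_of_nonneg ht0.le, norm_smul_of_nonneg hα.le, mul_pow, mul_pow,
      real_inner_smul_left, real_inner_smul_right, ← mul_assoc t]
  have hsquare_nonneg : 0 ≤ β / α * t * ‖t • u t + α • v t‖ ^ 2 := by
    have hβ := h.modulus_pos
    positivity
  rw [(h.hasDerivAt_motionEnergy ht).deriv]
  calc -(t * ⟪u t, y t⟫) + (1 - 2 * β * (α - 1)) * (t * ‖v t‖ ^ 2) - 2 * β * t ^ 2 * ⟪u t, v t⟫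
      ≤ -(t * (β * t ^ 2 / α * ‖u t‖ ^ 2)) + (1 - 2 * β * (α - 1)) * (t * ‖v t‖ ^ 2)
          - 2 * β * t ^ 2 * ⟪u t, v t⟫ := by
        grw [h.cocoercive t ht]
    _ = -((β * (α - 2) - 1) * (t * ‖v t‖ ^ 2)) - β / α * t * ‖t • u t + α • v t‖ ^ 2 := by
        rw [hsquare]
        field_simp
        ring
    _ ≤ -((β * (α - 2) - 1) * (t * ‖v t‖ ^ 2)) := sub_le_self _ hsquare_nonneg

theorem antitoneOn_motionEnergy (h : IsCocoerciveMotion α β t₀ y v a u)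
    (hαβ : 1 ≤ β * (α - 2)) : AntitoneOn (motionEnergy α β y v) (Ici t₀) := by
  refine antitoneOn_of_deriv_nonpos (convex_Ici t₀)
    (fun t ht => (h.hasDerivAt_motionEnergy ht).continuousAt.continuousWithinAt)
    (fun t ht => (h.hasDerivAt_motionEnergy
      (interior_subset ht)).differentiableAt.differentiableWithinAt)
    fun t ht => (h.deriv_motionEnergy_le (interior_subset ht)).trans ?_
  have ht0 : 0 ≤ t := h.start_pos.le.trans (interior_subset ht)
  exact neg_nonpos.2 (mul_nonneg (sub_nonneg.2 hαβ) (by positivity))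

theorem norm_sq_add_mul_norm_sq_le (h : IsCocoerciveMotion α β t₀ y v a u) (hαβ : 1 ≤ β * (α - 2))
    (ht : t₀ ≤ t) :
    ‖y t‖ ^ 2 + β * ‖t • v t‖ ^ 2 ≤ 2 * motionEnergy α β y v t₀ := by
  have hanti := h.antitoneOn_motionEnergy hαβ self_mem_Ici ht ht
  linarith [le_motionEnergy h.modulus_pos hαβ y v t]

theorem norm_position_le (h : IsCocoerciveMotion α β t₀ y v a u) (hαβ : 1 ≤ β * (α - 2))
    (ht : t₀ ≤ t) : ‖y t‖ ≤ √(2 * motionEnergy α β y v t₀) := by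
  have hβ := h.modulus_pos
  have hv : 0 ≤ β * ‖t • v t‖ ^ 2 := by positivity
  exact Real.le_sqrt_of_sq_le (by linarith [h.norm_sq_add_mul_norm_sq_le hαβ ht])

theorem mul_norm_velocity_le (h : IsCocoerciveMotion α β t₀ y v a u) (hαβ : 1 ≤ β * (α - 2))
    (ht : t₀ ≤ t) : t * ‖v t‖ ≤ √(2 * motionEnergy α β y v t₀ / β) := by
  have ht0 : 0 ≤ t := h.start_pos.le.trans ht
  rw [← norm_smul_of_nonneg ht0]
  refine Real.le_sqrt_of_sq_le ((le_div_iff₀' h.modulus_pos).2 ?_)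
  linarith [h.norm_sq_add_mul_norm_sq_le hαβ ht, sq_nonneg ‖y t‖]

theorem sq_mul_norm_force_le (h : IsCocoerciveMotion α β t₀ y v a u) (ht : t₀ ≤ t) :
    t ^ 2 * ‖u t‖ ≤ α / β * ‖y t‖ := by
  have hα := h.damping_pos
  have hβ := h.modulus_pos
  calc t ^ 2 * ‖u t‖ = α / β * (β * t ^ 2 / α * ‖u t‖) := by field_simp
    _ ≤ α / β * ‖y t‖ := by
        gcongr
        exact mul_norm_le_norm_of_mul_norm_sq_le_inner (h.cocoercive t ht)

theorem sq_mul_norm_acceleration_le (h : IsCocoerciveMotion α β t₀ y v a u)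
    (hαβ : 1 ≤ β * (α - 2)) (ht : t₀ ≤ t) :
    t ^ 2 * ‖a t‖ ≤ α * √(2 * motionEnergy α β y v t₀ / β) +
      α / β * √(2 * motionEnergy α β y v t₀) := by
  have hα := h.damping_pos
  have hβ := h.modulus_pos
  have ht0 : 0 ≤ t := h.start_pos.le.trans ht
  calc t ^ 2 * ‖a t‖ = t * ‖t • a t‖ := by rw [norm_smul_of_nonneg ht0]; ring
    _ ≤ t * (‖α • v t‖ + ‖t • u t‖) := by
        rw [h.smul_acceleration ht, ← norm_neg (α • v t)]
        gcongr
        exact norm_sub_le _ _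
    _ = α * (t * ‖v t‖) + t ^ 2 * ‖u t‖ := by
        rw [norm_smul_of_nonneg hα.le, norm_smul_of_nonneg ht0]
        ring
    _ ≤ α * (t * ‖v t‖) + α / β * ‖y t‖ := by grw [h.sq_mul_norm_force_le ht]
    _ ≤ _ := by grw [h.mul_norm_velocity_le hαβ ht, h.norm_position_le hαβ ht]

theorem integrableOn_mul_norm_velocity_sq (h : IsCocoerciveMotion α β t₀ y v a u)
    (hαβ : 1 < β * (α - 2)) : IntegrableOn (fun t => t * ‖v t‖ ^ 2) (Ici t₀) := by
  have hβ := h.modulus_pos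
  have hδ : 0 < β * (α - 2) - 1 := sub_pos.2 hαβ
  have hcont : ContinuousOn (fun t => t * ‖v t‖ ^ 2) (Ici t₀) := by
    have hv : ContinuousOn v (Ici t₀) :=
      fun t ht => (h.hasDerivAt_velocity t ht).continuousAt.continuousWithinAt
    exact continuousOn_id.mul (hv.norm.pow 2)
  have hint : IntegrableOn (fun t => (β * (α - 2) - 1) * (t * ‖v t‖ ^ 2)) (Ici t₀) := by
    refine integrableOn_Ici_of_le_neg_deriv (f := motionEnergy α β y v) (m := 0)
      (fun t ht => (h.hasDerivAt_motionEnergy ht).differentiableAt.hasDerivAt)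
      (fun t _ => le_trans (by positivity) (le_motionEnergy hβ hαβ.le y v t))
      ((continuousOn_const.mul hcont).locallyIntegrableOn measurableSet_Ici)
      (fun t ht => ?_) (fun t ht => le_neg_of_le_neg (h.deriv_motionEnergy_le ht))
    have ht0 : 0 ≤ t := h.start_pos.le.trans ht
    positivity
  exact (integrable_const_mul_iff (IsUnit.mk0 _ hδ.ne') _).1 hint

end IsCocoerciveMotion

end Energy

theorem MonotoneOp.isCocoerciveMotion {E : Type*} [NormedAddCommGroup E] [InnerProductSpace ℝ E]
    {A : E → Set E} (hA : MonotoneOp A) {z : E} (hz : 0 ∈ A z)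
    {t₀ α β : ℝ} (ht₀ : 0 < t₀) (hα : 0 < α) (hβ : 0 < β)
    {lam : ℝ → ℝ} (hlam : ∀ t, t₀ ≤ t → β * t ^ 2 / α ≤ lam t)
    {J : ℝ → E → E} (hJ : ∀ l, 0 < l → IsResolvent A l (J l))
    {x x' x'' : ℝ → E}
    (hx : ∀ t, t₀ ≤ t → HasDerivAt x (x' t) t)
    (hx' : ∀ t, t₀ ≤ t → HasDerivAt x' (x'' t) t)
    (hode : ∀ t, t₀ ≤ t → x'' t + (α / t) • x' t + yosida (lam t) (J (lam t)) (x t) = 0) :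
    IsCocoerciveMotion α β t₀ (fun t => x t - z) x' x''
      (fun t => yosida (lam t) (J (lam t)) (x t)) where
  start_pos := ht₀
  damping_pos := hα
  modulus_pos := hβ
  hasDerivAt_position t ht := (hx t ht).sub_const z
  hasDerivAt_velocity := hx'
  equation := hode
  cocoercive t ht := by
    have ht0 : 0 < t := ht₀.trans_le ht
    have hlam0 : 0 < lam t := lt_of_lt_of_le (by positivity) (hlam t ht)
    grw [hlam t ht]
    exact hA.mul_norm_sq_yosida_le_inner hz hlam0.ne' (hJ _ hlam0) (x t)

theorem speed_acceleration_decay_general {E : Type*} [NormedAddCommGroup E]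
    [InnerProductSpace ℝ E] {A : E → Set E} (hA : MonotoneOp A) (hS : ∃ z : E, 0 ∈ A z)
    {t₀ α ε : ℝ} (ht₀ : 0 < t₀) (hα : 2 < α) (hε : 2 / (α - 2) < ε)
    {lam : ℝ → ℝ} (hlam : ∀ t, t₀ ≤ t → (1 + ε) * t ^ 2 / α ^ 2 ≤ lam t)
    {J : ℝ → E → E} (hJ : ∀ l, 0 < l → IsResolvent A l (J l))
    {x x' x'' : ℝ → E}
    (hx : ∀ t, t₀ ≤ t → HasDerivAt x (x' t) t)
    (hx' : ∀ t, t₀ ≤ t → HasDerivAt x' (x'' t) t)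
    (hode : ∀ t, t₀ ≤ t → x'' t + (α / t) • x' t + yosida (lam t) (J (lam t)) (x t) = 0) :
    (∃ M, ∀ t, t₀ ≤ t → ‖x t‖ ≤ M) ∧
      (∃ C, ∀ t, t₀ ≤ t → t * ‖x' t‖ ≤ C) ∧
      (∃ C, ∀ t, t₀ ≤ t → t ^ 2 * ‖x'' t‖ ≤ C) ∧
      IntegrableOn (fun t => t * ‖x' t‖ ^ 2) (Ici t₀) := by
  obtain ⟨z, hz⟩ := hS
  have hα0 : 0 < α := by linarith
  have hα2 : 0 < α - 2 := sub_pos.2 hα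
  have hε0 : 0 < ε := lt_trans (by positivity) hε
  have hαβ : 1 < (1 + ε) / α * (α - 2) := by
    rw [div_mul_eq_mul_div, one_lt_div hα0]
    linarith [(div_lt_iff₀ hα2).1 hε]
  have hmodulus (t : ℝ) (ht : t₀ ≤ t) : (1 + ε) / α * t ^ 2 / α ≤ lam t :=
    calc (1 + ε) / α * t ^ 2 / α = (1 + ε) * t ^ 2 / α ^ 2 := by field_simp
      _ ≤ lam t := hlam t ht
  have hmotion := hA.isCocoerciveMotion hz ht₀ hα0 (by positivity) hmodulus hJ hx hx' hode
  exact ⟨⟨_, fun t ht => (norm_le_norm_sub_add (x t) z).trans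
      (add_le_add_left (hmotion.norm_position_le hαβ.le ht) ‖z‖)⟩,
    ⟨_, fun t ht => hmotion.mul_norm_velocity_le hαβ.le ht⟩,
    ⟨_, fun t ht => hmotion.sq_mul_norm_acceleration_le hαβ.le ht⟩,
    hmotion.integrableOn_mul_norm_velocity_sq hαβ⟩

/-- A priori estimates: for `α > 2`, `λ(t) = (1+ε)t²/α²` with `ε > 2/(α-2)`,
any `C²` solution of `ẍ + (α/t)ẋ + A_{λ(t)}(x) = 0` is bounded, satisfies
`sup t‖ẋ(t)‖ < ∞`, `sup t²‖ẍ(t)‖ < ∞`, and `∫ t‖ẋ(t)‖² dt < ∞`. -/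
theorem speed_acceleration_decay (A : H → Set H) (hA : MaximallyMonotone A)
    (hS : ∃ z : H, (0 : H) ∈ A z)
    (t₀ α ε : ℝ) (ht₀ : 0 < t₀) (hα : 2 < α) (hε : 2 / (α - 2) < ε)
    (lam : ℝ → ℝ) (hlamdef : ∀ t, lam t = (1 + ε) * t ^ 2 / α ^ 2)
    (J : ℝ → H → H) (hJ : ∀ l : ℝ, 0 < l → IsResolvent A l (J l))
    (x x' x'' : ℝ → H)
    (hx : ∀ t, t₀ ≤ t → HasDerivAt x (x' t) t)
    (hx' : ∀ t, t₀ ≤ t → HasDerivAt x' (x'' t) t)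
    (hode : ∀ t, t₀ ≤ t →
      x'' t + (α / t) • x' t + (lam t)⁻¹ • (x t - J (lam t) (x t)) = 0) :
    (∃ M, ∀ t, t₀ ≤ t → ‖x t‖ ≤ M) ∧
      (∃ C, ∀ t, t₀ ≤ t → t * ‖x' t‖ ≤ C) ∧
      (∃ C, ∀ t, t₀ ≤ t → t ^ 2 * ‖x'' t‖ ≤ C) ∧
      IntegrableOn (fun t => t * ‖x' t‖ ^ 2) (Ici t₀) volume := by
  exact speed_acceleration_decay_general hA.1 hS ht₀ hα hε (fun t _ => (hlamdef t).ge)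
    hJ hx hx' hode
end

section
/- Let α > 2, s > 0, λ_k = (1+ε)(s/α²)k² with ε > 2/(α−2), and let A be maximally monotone on a real Hilbert space H with A^{-1}(0) ≠ ∅. Then any sequence generated by the Regularized Inertial Proximal Algorithm y_k = x_k + (1 − α/k)(x_k − x_{k-1}), x_{k+1} = (λ_k/(λ_k+s)) y_k + (s/(λ_k+s)) (I + (λ_k+s)A)^{-1}(y_k) satisfies: ‖x_{k+1} − x_k‖ = O(1/k), ∑_k k‖x_k − x_{k-1}‖² < ∞, and (x_k) and (y_k) converge weakly to a common point of A^{-1}(0). -/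
open scoped RealInnerProductSpace

variable {H : Type*} [NormedAddCommGroup H] [InnerProductSpace ℝ H] [CompleteSpace H]

open Filter

/-!
The iteration is an inertial system `x_{k+2} - x_{k+1} = (1 - α/(k+1)) (x_{k+1} - x_k) - w_k`, whose
force `w_k = s ξ_k` is a Yosida value `ξ_k = A_{γ_k}(y_{k+1})` with `γ_k = λ_{k+1} + s`.
Cocoercivity of the Yosida approximation, whose constant `γ_k` grows like `k²`, makes an energy
decrease; this gives `∑ k ‖x_{k+1} - x_k‖² < ∞` and `∑ k³ ‖w_k‖² < ∞`. A sequence `u` with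
`∑ ‖u_k‖² / k < ∞` and `∑ k ‖u_{k+1} - u_k‖² < ∞` tends to `0`; this applies both to
`u_k = k (x_{k+1} - x_k)` and to `u_k = γ_k ξ_k`. The first limit shows that the distances of `x_k`
to the zeros of `A` converge, the second that weak cluster points are zeros, because
`ξ_k ∈ A (y_{k+1} - γ_k ξ_k)`. Opial's lemma concludes.
-/

open Asymptotics

section ScalarSequences

lemma eq_zero_of_tendsto_of_summable_div {a : ℕ → ℝ} {L : ℝ} (ha : Tendsto a atTop (nhds L))
    (hs : Summable fun k : ℕ => a k / (k + 1)) : L = 0 := by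
  by_contra hL
  have hequiv : (fun k : ℕ => a k / (k + 1)) ~[atTop] fun k : ℕ => L * (1 / (k + 1)) := by
    simpa only [Pi.div_def, Function.const_apply, mul_one_div] using
      ((isEquivalent_const_iff_tendsto hL).2 ha).div
        (IsEquivalent.refl (u := fun k : ℕ => (k : ℝ) + 1))
  have hharmonic := (summable_mul_left_iff hL).1
    ((Asymptotics.IsEquivalent.summable_iff_nat hequiv).1 hs)
  refine Real.not_summable_one_div_natCast ((summable_nat_add_iff 1).1 ?_)
  simpa only [Nat.cast_add, Nat.cast_one] using hharmonic

lemma exists_tendsto_of_eventually_succ_le {V : ℕ → ℝ} (hV : ∀ k, 0 ≤ V k)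
    (hdec : ∀ᶠ k in atTop, V (k + 1) ≤ V k) : ∃ L, Tendsto V atTop (nhds L) := by
  obtain ⟨K, hK⟩ := eventually_atTop.1 hdec
  have hanti : Antitone fun k => V (k + K) := antitone_nat_of_succ_le fun k => by
    simpa only [Nat.add_right_comm k 1 K] using hK (k + K) (Nat.le_add_left K k)
  have hbdd : BddBelow (Set.range fun k => V (k + K)) :=
    ⟨0, Set.forall_mem_range.2 fun k => hV (k + K)⟩
  exact ⟨_, (tendsto_add_atTop_iff_nat K).1 (tendsto_atTop_ciInf hanti hbdd)⟩

lemma summable_of_eventually_succ_add_le {V f : ℕ → ℝ} (hV : ∀ k, 0 ≤ V k) (hf : ∀ k, 0 ≤ f k)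
    (hdec : ∀ᶠ k in atTop, V (k + 1) + f k ≤ V k) : Summable f := by
  obtain ⟨K, hK⟩ := eventually_atTop.1 hdec
  refine (summable_nat_add_iff K).1
    (summable_of_sum_range_le (c := V K) (fun _ => hf _) fun n => ?_)
  calc ∑ i ∈ Finset.range n, f (i + K)
      ≤ ∑ i ∈ Finset.range n, (V (i + K) - V (i + 1 + K)) :=
        Finset.sum_le_sum fun i _ => by
          have := hK (i + K) (Nat.le_add_left K i)
          rw [Nat.add_right_comm i 1 K]
          linarith
    _ = V K - V (n + K) := by
        rw [Finset.sum_range_sub' (fun i => V (i + K)), zero_add]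
    _ ≤ V K := sub_le_self _ (hV _)

lemma le_mul_succ_sq_of_abs_succ_sub_le {f : ℕ → ℝ} {C : ℝ}
    (hf : ∀ k : ℕ, |f (k + 1) - f k| ≤ C * (k + 1)) (k : ℕ) :
    f k ≤ (|f 0| + C) * (k + 1) ^ 2 := by
  have hC : 0 ≤ C := by simpa using (abs_nonneg _).trans (hf 0)
  induction k with
  | zero => simpa using (le_abs_self (f 0)).trans (le_add_of_nonneg_right hC)
  | succ k ih =>
    have hstep : C * (k + 1) ≤ (|f 0| + C) * (2 * k + 3) := by
      gcongr
      · exact le_add_of_nonneg_left (abs_nonneg _)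
      · linarith [k.cast_nonneg (α := ℝ)]
      · norm_num
    push_cast
    linarith [(le_abs_self _).trans (hf k)]

end ScalarSequences

section WeightedSquares

variable {F : Type*} [SeminormedAddCommGroup F]

lemma summable_mul_norm_add_sq {c : ℕ → ℝ} {a b : ℕ → F} (hc : ∀ k, 0 ≤ c k)
    (ha : Summable fun k => c k * ‖a k‖ ^ 2) (hb : Summable fun k => c k * ‖b k‖ ^ 2) :
    Summable fun k => c k * ‖a k + b k‖ ^ 2 := by
  refine .of_nonneg_of_le (fun k => mul_nonneg (hc k) (sq_nonneg _)) (fun k => ?_)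
    ((ha.add hb).mul_left 2)
  calc c k * ‖a k + b k‖ ^ 2
      ≤ c k * (2 * (‖a k‖ ^ 2 + ‖b k‖ ^ 2)) := by
        refine mul_le_mul_of_nonneg_left ?_ (hc k)
        exact (pow_le_pow_left₀ (norm_nonneg _) (norm_add_le _ _) 2).trans add_sq_le
    _ = 2 * (c k * ‖a k‖ ^ 2 + c k * ‖b k‖ ^ 2) := by ring

lemma summable_mul_norm_sq_of_pow_three {u : ℕ → F}
    (hu : Summable fun k : ℕ => ((k : ℝ) + 1) ^ 3 * ‖u k‖ ^ 2) :
    Summable fun k : ℕ => ((k : ℝ) + 1) * ‖u k‖ ^ 2 := by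
  refine .of_nonneg_of_le (fun k => by positivity) (fun k => ?_) hu
  gcongr
  exact le_self_pow₀ (le_add_of_nonneg_left k.cast_nonneg) three_ne_zero

lemma abs_norm_sq_sub_norm_sq_le (u v : F) {t : ℝ} (ht : 0 < t) :
    |‖v‖ ^ 2 - ‖u‖ ^ 2| ≤ ‖u‖ ^ 2 / t + (t + 1) * ‖v - u‖ ^ 2 := by
  have hsum : ‖v‖ + ‖u‖ ≤ 2 * ‖u‖ + ‖v - u‖ := by
    linarith [norm_le_norm_add_norm_sub' v u]
  have hyoung : 2 * ‖u‖ * ‖v - u‖ ≤ ‖u‖ ^ 2 / t + t * ‖v - u‖ ^ 2 := by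
    have hsq : 0 ≤ (‖u‖ - t * ‖v - u‖) ^ 2 / t := by positivity
    have hexpand : (‖u‖ - t * ‖v - u‖) ^ 2 / t =
        ‖u‖ ^ 2 / t + t * ‖v - u‖ ^ 2 - 2 * ‖u‖ * ‖v - u‖ := by
      field_simp
      ring
    linarith
  calc |‖v‖ ^ 2 - ‖u‖ ^ 2|
      = (‖v‖ + ‖u‖) * |‖v‖ - ‖u‖| := by
        rw [sq_sub_sq, abs_mul, abs_of_nonneg (by positivity : 0 ≤ ‖v‖ + ‖u‖)]
    _ ≤ (2 * ‖u‖ + ‖v - u‖) * ‖v - u‖ :=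
        mul_le_mul hsum (abs_norm_sub_norm_le v u) (abs_nonneg _) (by positivity)
    _ ≤ ‖u‖ ^ 2 / t + (t + 1) * ‖v - u‖ ^ 2 := by linarith

-- The increments of `‖u k‖²` are absolutely summable, and `∑ ‖u k‖² / (k + 1) < ∞` rules out a
-- nonzero limit.
theorem tendsto_zero_of_summable_mul_norm_sub_sq {u : ℕ → F}
    (hu : Summable fun k : ℕ => ‖u k‖ ^ 2 / (k + 1))
    (hdiff : Summable fun k : ℕ => ((k : ℝ) + 1) * ‖u (k + 1) - u k‖ ^ 2) :
    Tendsto u atTop (nhds 0) := by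
  have hvar : Summable fun k => dist (‖u k‖ ^ 2) (‖u (k + 1)‖ ^ 2) := by
    refine .of_nonneg_of_le (fun _ => dist_nonneg) (fun k => ?_) (hu.add (hdiff.mul_left 2))
    rw [dist_comm, Real.dist_eq]
    refine (abs_norm_sq_sub_norm_sq_le (u k) (u (k + 1)) k.cast_add_one_pos).trans ?_
    have hsq : 0 ≤ (k : ℝ) * ‖u (k + 1) - u k‖ ^ 2 := by positivity
    linarith
  obtain ⟨L, hL⟩ := cauchySeq_tendsto_of_complete (cauchySeq_of_summable_dist hvar)
  rw [eq_zero_of_tendsto_of_summable_div hL hu] at hL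
  refine tendsto_zero_iff_norm_tendsto_zero.2 ?_
  simpa only [Real.sqrt_sq (norm_nonneg _), Real.sqrt_zero] using hL.sqrt

end WeightedSquares

section Boundedness

variable {ι F : Type*} [SeminormedAddCommGroup F] {l : Filter ι}

lemma tendsto_zero_of_tendsto_smul [NormedSpace ℝ F] {u : ι → F} {γ : ι → ℝ} {c : ℝ} (hc : 0 < c)
    (hγ : ∀ k, c ≤ γ k) (h : Tendsto (fun k => γ k • u k) l (nhds 0)) :
    Tendsto u l (nhds 0) := by
  refine squeeze_zero_norm (fun k => ?_) (by simpa using h.norm.const_mul c⁻¹)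
  rw [norm_smul, Real.norm_of_nonneg (hc.le.trans (hγ k)), ← div_eq_inv_mul, le_div_iff₀' hc]
  exact mul_le_mul_of_nonneg_right (hγ k) (norm_nonneg _)

lemma isBigO_one_of_tendsto_norm_sub {x : ι → F} {z : F} {L : ℝ}
    (h : Tendsto (fun k => ‖x k - z‖) l (nhds L)) : x =O[l] fun _ => (1 : ℝ) := by
  simpa only [sub_add_cancel] using
    (h.isBigO_one ℝ).of_norm_left.add (isBigO_const_const z one_ne_zero l)

end Boundedness

section WeakConvergence

variable {ι E : Type*} [NormedAddCommGroup E] [InnerProductSpace ℝ E] {l : Filter ι}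

/-- Weak convergence of `x` to `p` along the filter `l` in a real inner product space. In a Hilbert
space it is convergence in the weak topology, by the Riesz representation theorem. -/
def WeakTendsto (x : ι → E) (l : Filter ι) (p : E) : Prop :=
  ∀ v : E, Tendsto (fun k => ⟪x k, v⟫) l (nhds ⟪p, v⟫)

namespace WeakTendsto

variable {x e ξ : ι → E} {p q : E}

lemma add_tendsto (hx : WeakTendsto x l p) (he : Tendsto e l (nhds q)) :
    WeakTendsto (fun k => x k + e k) l (p + q) := fun v => by
  simpa only [inner_add_left] using (hx v).add (he.inner tendsto_const_nhds)

lemma tendsto_inner (hx : WeakTendsto x l p) (hbdd : x =O[l] fun _ => (1 : ℝ))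
    (hξ : Tendsto ξ l (nhds q)) : Tendsto (fun k => ⟪x k, ξ k⟫) l (nhds ⟪p, q⟫) := by
  have hvanish : Tendsto (fun k => ⟪ξ k - q, x k⟫) l (nhds 0) :=
    (tendsto_sub_nhds_zero_iff.2 hξ).op_zero_isBoundedUnder_le ((isBigO_one_iff ℝ).1 hbdd)
      (fun v w => ⟪v, w⟫) norm_inner_le_norm
  simpa only [real_inner_comm, inner_sub_right, add_sub_cancel, add_zero] using
    (hx q).add hvanish

end WeakTendsto

lemma exists_weakTendsto_of_isBigO_one [CompleteSpace E] {x : ι → E} (U : Ultrafilter ι)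
    (hbdd : x =O[(U : Filter ι)] fun _ => (1 : ℝ)) : ∃ p, WeakTendsto x U p := by
  obtain ⟨M, hM⟩ := hbdd.bound
  let φ : ι → WeakDual ℝ E := fun k => StrongDual.toWeakDual (InnerProductSpace.toDual ℝ E (x k))
  have hball : ∀ᶠ k in (U : Filter ι),
      φ k ∈ WeakDual.toStrongDual ⁻¹' Metric.closedBall (0 : StrongDual ℝ E) M := by
    filter_upwards [hM] with k hk
    simpa [φ] using hk
  obtain ⟨ψ, -, hψ⟩ := (WeakDual.isCompact_closedBall (𝕜 := ℝ) (E := E) 0 M).ultrafilter_le_nhds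
    (U.map φ) (le_principal_iff.2 hball)
  refine ⟨(InnerProductSpace.toDual ℝ E).symm (WeakDual.toStrongDual ψ), fun v => ?_⟩
  rw [InnerProductSpace.toDual_symm_apply]
  exact ((WeakDual.eval_continuous v).tendsto ψ).comp hψ

lemma exists_tendsto_inner_sub {x : ι → E} {p q : E}
    (hp : ∃ L, Tendsto (fun k => ‖x k - p‖) l (nhds L))
    (hq : ∃ L, Tendsto (fun k => ‖x k - q‖) l (nhds L)) :
    ∃ c, Tendsto (fun k => ⟪x k, p - q⟫) l (nhds c) := by
  obtain ⟨P, hP⟩ := hp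
  obtain ⟨Q, hQ⟩ := hq
  refine ⟨_, ((((hQ.pow 2).sub (hP.pow 2)).add_const (‖p‖ ^ 2 - ‖q‖ ^ 2)).div_const 2).congr
    fun k => ?_⟩
  rw [norm_sub_sq_real, norm_sub_sq_real, inner_sub_right]
  ring

-- Opial's lemma. Two weak cluster points `p`, `q` in `S` coincide, because `⟪x k, p - q⟫` converges
-- along the whole of `l`, so that `⟪p, p - q⟫ = ⟪q, p - q⟫`.
theorem exists_weakTendsto_of_tendsto_norm_sub [CompleteSpace E] [l.NeBot] {S : Set E}
    {x : ι → E} (hS : S.Nonempty)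
    (hdist : ∀ z ∈ S, ∃ L, Tendsto (fun k => ‖x k - z‖) l (nhds L))
    (hcluster : ∀ (U : Ultrafilter ι) (p : E), (U : Filter ι) ≤ l → WeakTendsto x U p → p ∈ S) :
    ∃ p ∈ S, WeakTendsto x l p := by
  have hbdd : x =O[l] fun _ => (1 : ℝ) := by
    obtain ⟨z, hz⟩ := hS
    obtain ⟨L, hL⟩ := hdist z hz
    exact isBigO_one_of_tendsto_norm_sub hL
  have hultra (U : Ultrafilter ι) (hU : (U : Filter ι) ≤ l) : ∃ p ∈ S, WeakTendsto x U p := by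
    obtain ⟨p, hp⟩ := exists_weakTendsto_of_isBigO_one U (hbdd.mono hU)
    exact ⟨p, hcluster U p hU hp, hp⟩
  obtain ⟨p, hpS, hp⟩ := hultra (Ultrafilter.of l) (Ultrafilter.of_le l)
  refine ⟨p, hpS, fun v => tendsto_iff_ultrafilter _ _ _ |>.2 fun U hU => ?_⟩
  obtain ⟨q, hqS, hq⟩ := hultra U hU
  obtain ⟨c, hc⟩ := exists_tendsto_inner_sub (hdist p hpS) (hdist q hqS)
  have hpc : ⟪p, p - q⟫ = c := tendsto_nhds_unique (hp _) (hc.mono_left (Ultrafilter.of_le l))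
  have hqc : ⟪q, p - q⟫ = c := tendsto_nhds_unique (hq _) (hc.mono_left hU)
  have hpq : p = q := by
    rw [← sub_eq_zero, ← inner_self_eq_zero (𝕜 := ℝ), inner_sub_left, hpc, hqc, sub_self]
  exact hpq ▸ hq v

end WeakConvergence

section MonotoneOperators

variable {E : Type*} [NormedAddCommGroup E] [InnerProductSpace ℝ E] {A : E → Set E}

theorem MaximallyMonotone.mem_of_weakTendsto {ι : Type*} {l : Filter ι} [l.NeBot]
    (hA : MaximallyMonotone A) {x ξ : ι → E} {p q : E} (hmem : ∀ᶠ k in l, ξ k ∈ A (x k))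
    (hx : WeakTendsto x l p) (hbdd : x =O[l] fun _ => (1 : ℝ)) (hξ : Tendsto ξ l (nhds q)) :
    q ∈ A p := by
  refine hA.2 p q fun z v hv => ?_
  have hpair : Tendsto (fun k => ⟪ξ k - v, x k - z⟫) l (nhds ⟪q - v, p - z⟫) := by
    have hξv := hξ.sub_const v
    simpa only [inner_sub_right, real_inner_comm] using
      (hx.tendsto_inner hbdd hξv).sub (hξv.inner (tendsto_const_nhds (x := z)))
  exact ge_of_tendsto hpair (hmem.mono fun k hk => hA.1 hk hv)

/-- The Yosida approximation `A_γ = γ⁻¹ (I - J)` of an operator with resolvent `J` of index `γ`. -/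
noncomputable def yosidaApprox (γ : ℝ) (J : E → E) (y : E) : E :=
  γ⁻¹ • (y - J y)

lemma IsResolvent.yosidaApprox_mem {γ : ℝ} {J : E → E} (hJ : IsResolvent A γ J) (hγ : γ ≠ 0)
    (y : E) : yosidaApprox γ J y ∈ A (y - γ • yosidaApprox γ J y) := by
  rw [yosidaApprox, smul_inv_smul₀ hγ, sub_sub_cancel]
  exact hJ y

lemma relaxed_resolvent_eq {lam s : ℝ} (h : lam + s ≠ 0) (J : E → E) (y : E) :
    (lam / (lam + s)) • y + (s / (lam + s)) • J y = y - s • yosidaApprox (lam + s) J y := by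
  have hcoeff : lam / (lam + s) = 1 - s / (lam + s) := by field_simp; ring
  rw [yosidaApprox, hcoeff, smul_smul, ← div_eq_mul_inv]
  module

namespace MonotoneOp

lemma mul_norm_sub_sq_le_inner (hA : MonotoneOp A) {γ : ℝ} {y y' ξ ξ' : E}
    (h : ξ ∈ A (y - γ • ξ)) (h' : ξ' ∈ A (y' - γ • ξ')) :
    γ * ‖ξ - ξ'‖ ^ 2 ≤ ⟪ξ - ξ', y - y'⟫ := by
  have hmono := hA h h'
  rw [sub_sub_sub_comm, ← smul_sub, inner_sub_right, real_inner_smul_right,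
    real_inner_self_eq_norm_sq] at hmono
  linarith

lemma mul_norm_sub_le (hA : MonotoneOp A) {γ : ℝ} {y y' ξ ξ' : E}
    (h : ξ ∈ A (y - γ • ξ)) (h' : ξ' ∈ A (y' - γ • ξ')) : γ * ‖ξ - ξ'‖ ≤ ‖y - y'‖ := by
  rcases (norm_nonneg (ξ - ξ')).eq_or_lt with hzero | hpos
  · rw [← hzero, mul_zero]
    exact norm_nonneg _
  · refine le_of_mul_le_mul_left ?_ hpos
    calc ‖ξ - ξ'‖ * (γ * ‖ξ - ξ'‖) = γ * ‖ξ - ξ'‖ ^ 2 := by ring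
      _ ≤ ⟪ξ - ξ', y - y'⟫ := hA.mul_norm_sub_sq_le_inner h h'
      _ ≤ ‖ξ - ξ'‖ * ‖y - y'‖ := real_inner_le_norm _ _

-- A Yosida value of index `γ'` at `y'` is one of index `γ` at `y' - (γ' - γ) • ξ'`, which reduces
-- the estimate to equal indices.
lemma norm_smul_sub_smul_le (hA : MonotoneOp A) {γ γ' : ℝ} (hγ : 0 ≤ γ) {y y' ξ ξ' : E}
    (h : ξ ∈ A (y - γ • ξ)) (h' : ξ' ∈ A (y' - γ' • ξ')) :
    ‖γ' • ξ' - γ • ξ‖ ≤ ‖y' - y‖ + 2 * |γ' - γ| * ‖ξ'‖ := by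
  have hshift : ξ' ∈ A (y' - (γ' - γ) • ξ' - γ • ξ') := by
    rwa [sub_sub, ← add_smul, sub_add_cancel]
  calc ‖γ' • ξ' - γ • ξ‖
      = ‖γ • (ξ' - ξ) + (γ' - γ) • ξ'‖ := by congr 1; module
    _ ≤ γ * ‖ξ' - ξ‖ + |γ' - γ| * ‖ξ'‖ := by
        refine (norm_add_le _ _).trans_eq ?_
        rw [norm_smul, norm_smul, Real.norm_of_nonneg hγ, Real.norm_eq_abs]
    _ ≤ ‖y' - (γ' - γ) • ξ' - y‖ + |γ' - γ| * ‖ξ'‖ :=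
        add_le_add_left (hA.mul_norm_sub_le hshift h) _
    _ ≤ ‖y' - y‖ + 2 * |γ' - γ| * ‖ξ'‖ := by
        have htri : ‖y' - (γ' - γ) • ξ' - y‖ ≤ ‖y' - y‖ + |γ' - γ| * ‖ξ'‖ := by
          rw [sub_right_comm, ← Real.norm_eq_abs, ← norm_smul]
          exact norm_sub_le _ _
        linarith

end MonotoneOp

end MonotoneOperators

section InertialDynamics

variable {E : Type*} [NormedAddCommGroup E] [InnerProductSpace ℝ E]

/-- The extrapolated point `y_{k+1} = x_{k+1} + (1 - α/(k+1)) (x_{k+1} - x_k)`. The index is shifted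
by one, here and below, so that `x_{k-1}` and the division by `k` make sense for every `k`. -/
noncomputable def extrapolation (α : ℝ) (x : ℕ → E) (k : ℕ) : E :=
  x (k + 1) + (1 - α / (k + 1)) • (x (k + 1) - x k)

lemma eq_extrapolation {α : ℝ} {x y : ℕ → E}
    (hy : ∀ k, 1 ≤ k → y k = x k + (1 - α / (k : ℝ)) • (x k - x (k - 1))) (k : ℕ) :
    y (k + 1) = extrapolation α x k := by
  rw [hy (k + 1) k.succ_pos, extrapolation, Nat.cast_add_one, Nat.add_sub_cancel]

/-- The displacement `y_{k+1} - x_{k+2}` from an extrapolated point to the next iterate: the force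
acting on the inertial system. -/
noncomputable def inertialForce (α : ℝ) (x : ℕ → E) (k : ℕ) : E :=
  extrapolation α x k - x (k + 2)

lemma inertialForce_eq (α : ℝ) (x : ℕ → E) (k : ℕ) :
    inertialForce α x k =
      (1 - α / (k + 1)) • (x (k + 1) - x k) - (x (k + 2) - x (k + 1)) := by
  rw [inertialForce, extrapolation]
  abel

lemma succ_smul_velocity_sub (α : ℝ) (x : ℕ → E) (k : ℕ) :
    ((k + 1 : ℕ) : ℝ) • (x (k + 2) - x (k + 1)) - (k : ℝ) • (x (k + 1) - x k) =
      (1 - α) • (x (k + 1) - x k) + (-((k : ℝ) + 1)) • inertialForce α x k := by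
  have hcoeff : ((k : ℝ) + 1) * (1 - α / (k + 1)) = k + 1 - α := by field_simp
  rw [inertialForce_eq, smul_sub (-((k : ℝ) + 1)), smul_smul, neg_mul, hcoeff, Nat.cast_add_one]
  module

lemma extrapolation_succ_sub (α : ℝ) (x : ℕ → E) (k : ℕ) :
    extrapolation α x (k + 1) - extrapolation α x k =
      x (k + 3) - x (k + 2) + (inertialForce α x (k + 1) + -inertialForce α x k) := by
  rw [inertialForce, inertialForce]
  abel

/-- The Lyapunov function of the inertial dynamics at time `t`, for a particle at position `a`
relative to its target with next displacement `v`. With `h = ‖·‖² / 2` it is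
`t (h(a + v) - h(a)) + (α - 1) h(a) + η t² ‖v‖²`. -/
noncomputable def inertialEnergy (α η t : ℝ) (a v : E) : ℝ :=
  t * (⟪a, v⟫ + ‖v‖ ^ 2 / 2) + (α - 1) / 2 * ‖a‖ ^ 2 + η * t ^ 2 * ‖v‖ ^ 2

lemma inertialEnergy_eq_lower {α : ℝ} (hα : α ≠ 0) (η t : ℝ) (a v : E) :
    inertialEnergy α η t a v = (α - 2) / 4 * ‖a‖ ^ 2 + t / 2 * ‖v‖ ^ 2 +
      (η - 1 / α) * (t * ‖v‖) ^ 2 + 1 / α * ‖(α / 2) • a + t • v‖ ^ 2 := by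
  rw [inertialEnergy, norm_add_sq_real, real_inner_smul_left, real_inner_smul_right, norm_smul,
    norm_smul, mul_pow ‖α / 2‖, mul_pow ‖t‖, Real.norm_eq_abs, Real.norm_eq_abs, sq_abs, sq_abs]
  field_simp
  ring

lemma inertialEnergy_eq_add_smul {α : ℝ} (hα : α ≠ 1) (η t : ℝ) (a v : E) :
    inertialEnergy α η t a v = (α - 1) / 2 * ‖a + (α - 1)⁻¹ • t • v‖ ^ 2 + t / 2 * ‖v‖ ^ 2 +
      (η - 1 / (2 * (α - 1))) * ‖t • v‖ ^ 2 := by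
  have hα' : α - 1 ≠ 0 := sub_ne_zero.2 hα
  rw [inertialEnergy, norm_add_sq_real, norm_smul _ (t • v), real_inner_smul_right,
    real_inner_smul_right, norm_smul, mul_pow ‖(α - 1)⁻¹‖, mul_pow ‖t‖, Real.norm_eq_abs,
    Real.norm_eq_abs, sq_abs, sq_abs]
  field_simp
  ring

lemma inertialEnergy_nonneg {α η t : ℝ} (hα : 2 ≤ α) (hη : 1 / α ≤ η) (ht : 0 ≤ t) (a v : E) :
    0 ≤ inertialEnergy α η t a v := by
  have hα0 : 0 < α := two_pos.trans_le hα
  rw [inertialEnergy_eq_lower hα0.ne']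
  have hposition : 0 ≤ (α - 2) / 4 * ‖a‖ ^ 2 := mul_nonneg (by linarith) (sq_nonneg _)
  have hvelocity : 0 ≤ (η - 1 / α) * (t * ‖v‖) ^ 2 :=
    mul_nonneg (sub_nonneg.2 hη) (sq_nonneg _)
  exact add_nonneg (add_nonneg (add_nonneg hposition (by positivity)) hvelocity) (by positivity)

lemma inertialEnergy_sub_inertialEnergy {α t : ℝ} (hα : α ≠ 0) (ht : t ≠ 0) (η : ℝ)
    {b v v' w : E} (hw : w = (1 - α / t) • v - v') :
    inertialEnergy α η (t - 1) (b - v) v - inertialEnergy α η t b v' =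
      ((α - 2) * η - 1) * (t * ‖v‖ ^ 2) - η / α * (t ^ 3 * ‖w‖ ^ 2) + t * ⟪w, b + v'⟫
        + t / 2 * ‖w‖ ^ 2 + η / α * t ^ 3 * (1 - α / t) * ‖v - v'‖ ^ 2
        + α * (2 + (1 - α / t)) / 2 * ‖v‖ ^ 2 + η * ‖v‖ ^ 2 := by
  simp only [inertialEnergy, hw, norm_sub_sq_real, inner_sub_left, inner_add_right,
    real_inner_smul_left, norm_smul, mul_pow, Real.norm_eq_abs, sq_abs,
    real_inner_self_eq_norm_sq]
  rw [real_inner_comm b v, real_inner_comm b v']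
  field_simp
  ring

lemma inertialEnergy_add_le {α η κ t : ℝ} (hα : 0 < α) (hη : 0 ≤ η) (ht : α ≤ t)
    {b v v' w : E} (hw : w = (1 - α / t) • v - v') (hforce : κ * t ^ 2 * ‖w‖ ^ 2 ≤ ⟪w, b + v'⟫) :
    inertialEnergy α η t b v' +
        (((α - 2) * η - 1) * (t * ‖v‖ ^ 2) + (κ - η / α) * (t ^ 3 * ‖w‖ ^ 2)) ≤
      inertialEnergy α η (t - 1) (b - v) v := by
  have ht0 : 0 < t := hα.trans_le ht
  have hfriction : 0 ≤ 1 - α / t := sub_nonneg.2 ((div_le_one ht0).2 ht)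
  have hpower : 0 ≤ t * (⟪w, b + v'⟫ - κ * t ^ 2 * ‖w‖ ^ 2) :=
    mul_nonneg ht0.le (sub_nonneg.2 hforce)
  have hslack : 0 ≤ t / 2 * ‖w‖ ^ 2 + η / α * t ^ 3 * (1 - α / t) * ‖v - v'‖ ^ 2
      + α * (2 + (1 - α / t)) / 2 * ‖v‖ ^ 2 + η * ‖v‖ ^ 2 := by
    positivity
  linarith [inertialEnergy_sub_inertialEnergy hα.ne' ht0.ne' η (b := b) hw]

/-- The force of the inertial dynamics pulls `x` towards `z`, with a strength that grows
quadratically in time. This is all the convergence analysis uses about the algorithm. -/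
def InertialDescent (α κ : ℝ) (x : ℕ → E) (z : E) : Prop :=
  ∀ k : ℕ, κ * (k + 1) ^ 2 * ‖inertialForce α x k‖ ^ 2 ≤ ⟪inertialForce α x k, x (k + 2) - z⟫

namespace InertialDescent

variable {α κ η : ℝ} {x : ℕ → E} {z : E}

lemma eventually_inertialEnergy_add_le (h : InertialDescent α κ x z) (hα : 0 < α) (hη : 0 ≤ η) :
    ∀ᶠ k : ℕ in atTop,
      inertialEnergy α η (k + 1 : ℕ) (x (k + 1) - z) (x (k + 2) - x (k + 1)) +
          (((α - 2) * η - 1) * ((k + 1) * ‖x (k + 1) - x k‖ ^ 2) +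
            (κ - η / α) * ((k + 1) ^ 3 * ‖inertialForce α x k‖ ^ 2)) ≤
        inertialEnergy α η k (x k - z) (x (k + 1) - x k) := by
  filter_upwards [eventually_ge_atTop ⌈α⌉₊] with k hk
  have ht : α ≤ (k : ℝ) + 1 := (Nat.ceil_le.1 hk).trans (lt_add_one _).le
  have hforce : κ * (k + 1) ^ 2 * ‖inertialForce α x k‖ ^ 2 ≤
      ⟪inertialForce α x k, (x (k + 1) - z) + (x (k + 2) - x (k + 1))⟫ := by
    rw [add_comm (x (k + 1) - z), sub_add_sub_cancel]
    exact h k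
  simpa only [Nat.cast_add_one, add_sub_cancel_right, sub_sub_sub_cancel_left, sub_sub_cancel,
    sub_sub_sub_comm, sub_self, sub_zero] using
    inertialEnergy_add_le hα hη ht (inertialForce_eq α x k) hforce

lemma exists_energy_coefficient (hα : 2 < α) (hκ : 1 / (α - 2) < α * κ) :
    ∃ η, 1 / α ≤ η ∧ 0 < (α - 2) * η - 1 ∧ 0 < κ - η / α := by
  have hα0 : 0 < α := two_pos.trans hα
  have hα2 : 0 < α - 2 := sub_pos.2 hα
  obtain ⟨η, hη, hηκ⟩ := exists_between hκ
  refine ⟨η, (one_div_le_one_div_of_le hα2 (by linarith)).trans hη.le, ?_, ?_⟩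
  · rwa [sub_pos, ← div_lt_iff₀' hα2]
  · rwa [sub_pos, div_lt_iff₀' hα0]

lemma exists_lyapunov (h : InertialDescent α κ x z) (hα : 2 < α) (hκ : 1 / (α - 2) < α * κ) :
    ∃ η δ δ' : ℝ, 0 < δ ∧ 0 < δ' ∧
      (∀ k : ℕ, 0 ≤ inertialEnergy α η k (x k - z) (x (k + 1) - x k)) ∧
      ∀ᶠ k : ℕ in atTop,
        inertialEnergy α η (k + 1 : ℕ) (x (k + 1) - z) (x (k + 2) - x (k + 1)) +
            (δ * ((k + 1) * ‖x (k + 1) - x k‖ ^ 2) +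
              δ' * ((k + 1) ^ 3 * ‖inertialForce α x k‖ ^ 2)) ≤
          inertialEnergy α η k (x k - z) (x (k + 1) - x k) := by
  have hα0 : 0 < α := two_pos.trans hα
  obtain ⟨η, hη, hδ, hδ'⟩ := exists_energy_coefficient hα hκ
  exact ⟨η, _, _, hδ, hδ', fun k => inertialEnergy_nonneg hα.le hη k.cast_nonneg _ _,
    h.eventually_inertialEnergy_add_le hα0 ((one_div_pos.2 hα0).le.trans hη)⟩

theorem summable_mul_norm_velocity_sq (h : InertialDescent α κ x z) (hα : 2 < α)
    (hκ : 1 / (α - 2) < α * κ) :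
    Summable fun k : ℕ => ((k : ℝ) + 1) * ‖x (k + 1) - x k‖ ^ 2 := by
  obtain ⟨η, δ, δ', hδ, hδ', hnonneg, hdec⟩ := h.exists_lyapunov hα hκ
  refine (summable_mul_left_iff hδ.ne').1
    (summable_of_eventually_succ_add_le hnonneg (fun k => by positivity) ?_)
  filter_upwards [hdec] with k hk
  have hforce : 0 ≤ δ' * (((k : ℝ) + 1) ^ 3 * ‖inertialForce α x k‖ ^ 2) := by positivity
  linarith

theorem summable_pow_three_mul_norm_force_sq (h : InertialDescent α κ x z) (hα : 2 < α)
    (hκ : 1 / (α - 2) < α * κ) :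
    Summable fun k : ℕ => ((k : ℝ) + 1) ^ 3 * ‖inertialForce α x k‖ ^ 2 := by
  obtain ⟨η, δ, δ', hδ, hδ', hnonneg, hdec⟩ := h.exists_lyapunov hα hκ
  refine (summable_mul_left_iff hδ'.ne').1
    (summable_of_eventually_succ_add_le hnonneg (fun k => by positivity) ?_)
  filter_upwards [hdec] with k hk
  have hvelocity : 0 ≤ δ * (((k : ℝ) + 1) * ‖x (k + 1) - x k‖ ^ 2) := by positivity
  linarith

lemma exists_tendsto_inertialEnergy (h : InertialDescent α κ x z) (hα : 2 < α)
    (hκ : 1 / (α - 2) < α * κ) :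
    ∃ η L, Tendsto (fun k : ℕ => inertialEnergy α η k (x k - z) (x (k + 1) - x k)) atTop
      (nhds L) := by
  obtain ⟨η, δ, δ', hδ, hδ', hnonneg, hdec⟩ := h.exists_lyapunov hα hκ
  refine ⟨η, exists_tendsto_of_eventually_succ_le hnonneg ?_⟩
  filter_upwards [hdec] with k hk
  exact le_trans (le_add_of_nonneg_right (by positivity)) hk

theorem tendsto_smul_velocity (h : InertialDescent α κ x z) (hα : 2 < α)
    (hκ : 1 / (α - 2) < α * κ) :
    Tendsto (fun k : ℕ => (k : ℝ) • (x (k + 1) - x k)) atTop (nhds 0) := by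
  have hvelocity := h.summable_mul_norm_velocity_sq hα hκ
  have hforce := h.summable_pow_three_mul_norm_force_sq hα hκ
  refine tendsto_zero_of_summable_mul_norm_sub_sq ?_ ?_
  · refine .of_nonneg_of_le (fun k => by positivity) (fun k => ?_) hvelocity
    rw [norm_smul, mul_pow, Real.norm_natCast, div_le_iff₀ k.cast_add_one_pos]
    calc (k : ℝ) ^ 2 * ‖x (k + 1) - x k‖ ^ 2
        ≤ (k + 1 : ℝ) ^ 2 * ‖x (k + 1) - x k‖ ^ 2 := by
          gcongr
          exact (lt_add_one _).le
      _ = (k + 1) * ‖x (k + 1) - x k‖ ^ 2 * (k + 1) := by ring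
  · simp only [succ_smul_velocity_sub α]
    refine summable_mul_norm_add_sq (fun k => by positivity)
      ((hvelocity.mul_left ((1 - α) ^ 2)).congr fun k => ?_) (hforce.congr fun k => ?_)
    · rw [norm_smul, mul_pow, Real.norm_eq_abs, sq_abs]
      ring
    · rw [norm_smul, mul_pow, Real.norm_eq_abs, sq_abs]
      ring

theorem exists_tendsto_norm_sub (h : InertialDescent α κ x z) (hα : 2 < α)
    (hκ : 1 / (α - 2) < α * κ) : ∃ L, Tendsto (fun k => ‖x k - z‖) atTop (nhds L) := by
  have hα1 : 0 < α - 1 := by linarith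
  have hvelocity := h.tendsto_smul_velocity hα hκ
  have hkinetic : Tendsto (fun k : ℕ => (k : ℝ) / 2 * ‖x (k + 1) - x k‖ ^ 2) atTop (nhds 0) := by
    refine squeeze_zero (fun k => by positivity) (fun k => ?_)
      (h.summable_mul_norm_velocity_sq hα hκ).tendsto_atTop_zero
    gcongr
    linarith [k.cast_nonneg (α := ℝ)]
  obtain ⟨η, L, hL⟩ := h.exists_tendsto_inertialEnergy hα hκ
  have hshifted : Tendsto
      (fun k : ℕ => ‖x k - z + (α - 1)⁻¹ • (k : ℝ) • (x (k + 1) - x k)‖ ^ 2) atTop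
      (nhds ((L - 0 - (η - 1 / (2 * (α - 1))) * ‖(0 : E)‖ ^ 2) / ((α - 1) / 2))) := by
    refine (((hL.sub hkinetic).sub
      ((hvelocity.norm.pow 2).const_mul (η - 1 / (2 * (α - 1))))).div_const ((α - 1) / 2)).congr
      fun k => ?_
    rw [inertialEnergy_eq_add_smul (sub_ne_zero.1 hα1.ne')]
    field_simp
    ring
  have hnorm := hshifted.sqrt
  simp only [Real.sqrt_sq (norm_nonneg _)] at hnorm
  have hcorrection :
      Tendsto (fun k : ℕ => ‖(α - 1)⁻¹ • (k : ℝ) • (x (k + 1) - x k)‖) atTop (nhds 0) := by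
    simpa only [smul_zero, norm_zero] using (hvelocity.const_smul (α - 1)⁻¹).norm
  refine ⟨_, hnorm.congr_dist (squeeze_zero (fun _ => dist_nonneg) (fun k => ?_) hcorrection)⟩
  simpa only [Real.dist_eq, add_sub_cancel_left] using
    abs_norm_sub_norm_le (x k - z + (α - 1)⁻¹ • (k : ℝ) • (x (k + 1) - x k)) (x k - z)

end InertialDescent

lemma summable_mul_norm_extrapolation_sub_sq {α : ℝ} {x : ℕ → E}
    (hvelocity : Summable fun k : ℕ => ((k : ℝ) + 1) * ‖x (k + 1) - x k‖ ^ 2)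
    (hforce : Summable fun k : ℕ => ((k : ℝ) + 1) * ‖inertialForce α x k‖ ^ 2) :
    Summable fun k : ℕ =>
      ((k : ℝ) + 1) * ‖extrapolation α x (k + 1) - extrapolation α x k‖ ^ 2 := by
  have hnonneg (k : ℕ) : (0 : ℝ) ≤ k + 1 := by positivity
  simp only [extrapolation_succ_sub]
  refine summable_mul_norm_add_sq hnonneg ?_ (summable_mul_norm_add_sq hnonneg ?_ ?_)
  · refine .of_nonneg_of_le (fun k => by positivity) (fun k => ?_)
      ((summable_nat_add_iff 2).2 hvelocity)
    push_cast
    gcongr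
    exact le_add_of_nonneg_right zero_le_two
  · refine .of_nonneg_of_le (fun k => by positivity) (fun k => ?_)
      ((summable_nat_add_iff 1).2 hforce)
    push_cast
    gcongr
    exact le_add_of_nonneg_right zero_le_one
  · simpa only [norm_neg] using hforce

end InertialDynamics

section RegularizedInertialProximal

variable {E : Type*} [NormedAddCommGroup E] [InnerProductSpace ℝ E]

theorem MonotoneOp.tendsto_smul_zero {A : E → Set E} (hA : MonotoneOp A) {γ : ℕ → ℝ} {C : ℝ}
    {y ξ : ℕ → E} (hmem : ∀ k, ξ k ∈ A (y k - γ k • ξ k)) (hγ : ∀ k, 0 ≤ γ k)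
    (hγsub : ∀ k : ℕ, |γ (k + 1) - γ k| ≤ C * (k + 1))
    (hy : Summable fun k : ℕ => ((k : ℝ) + 1) * ‖y (k + 1) - y k‖ ^ 2)
    (hξ : Summable fun k : ℕ => ((k : ℝ) + 1) ^ 3 * ‖ξ k‖ ^ 2) :
    Tendsto (fun k => γ k • ξ k) atTop (nhds 0) := by
  refine tendsto_zero_of_summable_mul_norm_sub_sq ?_ ?_
  · refine .of_nonneg_of_le (fun k => by positivity) (fun k => ?_) (hξ.mul_left ((|γ 0| + C) ^ 2))
    rw [norm_smul, Real.norm_of_nonneg (hγ k), div_le_iff₀ k.cast_add_one_pos]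
    calc (γ k * ‖ξ k‖) ^ 2 ≤ ((|γ 0| + C) * (k + 1) ^ 2 * ‖ξ k‖) ^ 2 := by
          have := hγ k
          gcongr
          exact le_mul_succ_sq_of_abs_succ_sub_le hγsub k
      _ = (|γ 0| + C) ^ 2 * ((k + 1) ^ 3 * ‖ξ k‖ ^ 2) * (k + 1) := by ring
  · have hindex : Summable fun k : ℕ =>
        ((k : ℝ) + 1) * ‖2 * |γ (k + 1) - γ k| * ‖ξ (k + 1)‖‖ ^ 2 := by
      refine .of_nonneg_of_le (fun k => by positivity) (fun k => ?_)
        (((summable_nat_add_iff 1).2 hξ).mul_left (4 * C ^ 2))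
      rw [Real.norm_of_nonneg (by positivity)]
      calc ((k : ℝ) + 1) * (2 * |γ (k + 1) - γ k| * ‖ξ (k + 1)‖) ^ 2
          ≤ (k + 1) * (2 * (C * (k + 1)) * ‖ξ (k + 1)‖) ^ 2 := by
            gcongr
            exact hγsub k
        _ = 4 * C ^ 2 * ((k + 1) ^ 3 * ‖ξ (k + 1)‖ ^ 2) := by ring
        _ ≤ 4 * C ^ 2 * (((k + 1 : ℕ) + 1) ^ 3 * ‖ξ (k + 1)‖ ^ 2) := by
            gcongr
            exact k.le_succ
    refine .of_nonneg_of_le (fun k => by positivity) (fun k => ?_)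
      (summable_mul_norm_add_sq (fun k : ℕ => k.cast_add_one_pos.le) (a := fun k =>
        ‖y (k + 1) - y k‖) (by simpa only [norm_norm] using hy) hindex)
    gcongr
    exact (hA.norm_smul_sub_smul_le (hγ k) (hmem k) (hmem (k + 1))).trans (Real.le_norm_self _)

/-- `x` is generated by the regularized inertial proximal algorithm
`x_{k+2} = y_{k+1} - s A_{γ_k}(y_{k+1})`, with `ξ k` the Yosida approximation `A_{γ_k}(y_{k+1})`. It
is characterized by the inclusion `ξ k ∈ A (y_{k+1} - γ k • ξ k)`, without choosing resolvents. -/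
structure RegularizedInertialSeq (A : E → Set E) (s α : ℝ) (γ : ℕ → ℝ) (x ξ : ℕ → E) : Prop where
  mem (k : ℕ) : ξ k ∈ A (extrapolation α x k - γ k • ξ k)
  iterate (k : ℕ) : x (k + 2) = extrapolation α x k - s • ξ k

namespace RegularizedInertialSeq

variable {A : E → Set E} {s α κ C : ℝ} {γ : ℕ → ℝ} {x ξ : ℕ → E}

lemma of_isResolvent {lam : ℕ → ℝ} {J : ℕ → E → E} {y : ℕ → E}
    (hγ : ∀ k, 1 ≤ k → lam k + s ≠ 0) (hJ : ∀ k, 1 ≤ k → IsResolvent A (lam k + s) (J k))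
    (hy : ∀ k, 1 ≤ k → y k = x k + (1 - α / (k : ℝ)) • (x k - x (k - 1)))
    (hx : ∀ k, 1 ≤ k →
      x (k + 1) = (lam k / (lam k + s)) • y k + (s / (lam k + s)) • J k (y k)) :
    RegularizedInertialSeq A s α (fun k => lam (k + 1) + s) x
      fun k => yosidaApprox (lam (k + 1) + s) (J (k + 1)) (extrapolation α x k) := by
  refine ⟨fun k => (hJ _ k.succ_pos).yosidaApprox_mem (hγ _ k.succ_pos) _, fun k => ?_⟩
  rw [hx (k + 1) k.succ_pos, relaxed_resolvent_eq (hγ _ k.succ_pos), eq_extrapolation hy]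

lemma inertialForce_eq_smul (h : RegularizedInertialSeq A s α γ x ξ) (k : ℕ) :
    inertialForce α x k = s • ξ k := by
  rw [inertialForce, h.iterate, sub_sub_cancel]

-- Cocoercivity of the Yosida approximation, compared with the value `0` at the zero `z` of `A`.
theorem inertialDescent (h : RegularizedInertialSeq A s α γ x ξ) (hA : MonotoneOp A) (hs : 0 ≤ s)
    (hγ : ∀ k : ℕ, κ * s * (k + 1) ^ 2 ≤ γ k - s) {z : E} (hz : (0 : E) ∈ A z) :
    InertialDescent α κ x z := fun k => by
  have hzero : (0 : E) ∈ A (z - γ k • (0 : E)) := by rwa [smul_zero, sub_zero]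
  have hcoercive : γ k * ‖ξ k‖ ^ 2 ≤ ⟪ξ k, extrapolation α x k - z⟫ := by
    simpa only [sub_zero] using hA.mul_norm_sub_sq_le_inner (h.mem k) hzero
  have hnext : ⟪ξ k, x (k + 2) - z⟫ = ⟪ξ k, extrapolation α x k - z⟫ - s * ‖ξ k‖ ^ 2 := by
    rw [h.iterate, sub_right_comm, inner_sub_right, real_inner_smul_right,
      real_inner_self_eq_norm_sq]
  rw [h.inertialForce_eq_smul, norm_smul, mul_pow, Real.norm_of_nonneg hs, real_inner_smul_left,
    hnext]
  calc κ * (k + 1) ^ 2 * (s ^ 2 * ‖ξ k‖ ^ 2)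
      = s * (κ * s * (k + 1) ^ 2 * ‖ξ k‖ ^ 2) := by ring
    _ ≤ s * ((γ k - s) * ‖ξ k‖ ^ 2) := by gcongr; exact hγ k
    _ ≤ s * (⟪ξ k, extrapolation α x k - z⟫ - s * ‖ξ k‖ ^ 2) := by gcongr; linarith

lemma summable_pow_three_mul_norm_sq (h : RegularizedInertialSeq A s α γ x ξ) (hs : s ≠ 0)
    (hforce : Summable fun k : ℕ => ((k : ℝ) + 1) ^ 3 * ‖inertialForce α x k‖ ^ 2) :
    Summable fun k : ℕ => ((k : ℝ) + 1) ^ 3 * ‖ξ k‖ ^ 2 := by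
  refine (summable_mul_left_iff (pow_ne_zero 2 hs)).1 (hforce.congr fun k => ?_)
  rw [h.inertialForce_eq_smul, norm_smul, mul_pow, Real.norm_eq_abs, sq_abs]
  ring

lemma eq_add_smul (h : RegularizedInertialSeq A s α γ x ξ) (k : ℕ) :
    extrapolation α x k = x (k + 2) + s • ξ k :=
  sub_eq_iff_eq_add.1 (h.iterate k).symm

theorem tendsto_smul_zero (h : RegularizedInertialSeq A s α γ x ξ) (hA : MonotoneOp A)
    (hγ : ∀ k, 0 ≤ γ k) (hγsub : ∀ k : ℕ, |γ (k + 1) - γ k| ≤ C * (k + 1)) (hs : s ≠ 0)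
    (hvelocity : Summable fun k : ℕ => ((k : ℝ) + 1) * ‖x (k + 1) - x k‖ ^ 2)
    (hforce : Summable fun k : ℕ => ((k : ℝ) + 1) ^ 3 * ‖inertialForce α x k‖ ^ 2) :
    Tendsto (fun k => γ k • ξ k) atTop (nhds 0) :=
  hA.tendsto_smul_zero h.mem hγ hγsub
    (summable_mul_norm_extrapolation_sub_sq hvelocity (summable_mul_norm_sq_of_pow_three hforce))
    (h.summable_pow_three_mul_norm_sq hs hforce)

theorem zero_mem_of_weakTendsto (h : RegularizedInertialSeq A s α γ x ξ)
    (hA : MaximallyMonotone A) (hξ : Tendsto ξ atTop (nhds 0))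
    (hγξ : Tendsto (fun k => γ k • ξ k) atTop (nhds 0)) (hx : x =O[atTop] fun _ => (1 : ℝ))
    {l : Filter ℕ} [l.NeBot] (hl : l ≤ atTop) {p : E}
    (hp : WeakTendsto (fun k => x (k + 2)) l p) : (0 : E) ∈ A p := by
  have hcorrection : Tendsto (fun k => s • ξ k - γ k • ξ k) atTop (nhds 0) := by
    simpa only [smul_zero, sub_zero] using (hξ.const_smul s).sub hγξ
  have hbdd : (fun k => x (k + 2) + (s • ξ k - γ k • ξ k)) =O[atTop] fun _ => (1 : ℝ) :=
    (hx.comp_tendsto (tendsto_add_atTop_nat 2)).add (hcorrection.isBigO_one ℝ)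
  have hmem (k : ℕ) : ξ k ∈ A (x (k + 2) + (s • ξ k - γ k • ξ k)) := by
    rw [← add_sub_assoc, ← h.eq_add_smul]
    exact h.mem k
  have hweak := hp.add_tendsto (hcorrection.mono_left hl)
  rw [add_zero] at hweak
  exact hA.mem_of_weakTendsto (.of_forall hmem) hweak (hbdd.mono hl) (hξ.mono_left hl)

theorem exists_weakTendsto [CompleteSpace E] (h : RegularizedInertialSeq A s α γ x ξ)
    (hA : MaximallyMonotone A) (hS : ∃ z, (0 : E) ∈ A z) (hs : 0 < s) (hα : 2 < α)
    (hκ : 1 / (α - 2) < α * κ) (hγ : ∀ k : ℕ, κ * s * (k + 1) ^ 2 ≤ γ k - s)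
    (hγsub : ∀ k : ℕ, |γ (k + 1) - γ k| ≤ C * (k + 1)) :
    ∃ p, (0 : E) ∈ A p ∧ WeakTendsto x atTop p ∧ WeakTendsto (extrapolation α x) atTop p := by
  have hκ0 : 0 ≤ κ :=
    (pos_of_mul_pos_right ((one_div_pos.2 (sub_pos.2 hα)).trans hκ) (two_pos.trans hα).le).le
  have hγs (k : ℕ) : s ≤ γ k := by
    have : 0 ≤ κ * s * ((k : ℝ) + 1) ^ 2 := by positivity
    linarith [hγ k]
  have hdescent {z : E} (hz : (0 : E) ∈ A z) : InertialDescent α κ x z :=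
    h.inertialDescent hA.1 hs.le hγ hz
  obtain ⟨z, hz⟩ := hS
  have hforce := (hdescent hz).summable_pow_three_mul_norm_force_sq hα hκ
  have hγξ := h.tendsto_smul_zero hA.1 (fun k => hs.le.trans (hγs k)) hγsub hs.ne'
    ((hdescent hz).summable_mul_norm_velocity_sq hα hκ) hforce
  have hξ : Tendsto ξ atTop (nhds 0) := tendsto_zero_of_tendsto_smul hs hγs hγξ
  have hbdd : x =O[atTop] fun _ => (1 : ℝ) := by
    obtain ⟨L, hL⟩ := (hdescent hz).exists_tendsto_norm_sub hα hκ
    exact isBigO_one_of_tendsto_norm_sub hL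
  obtain ⟨p, hpA, hp⟩ := exists_weakTendsto_of_tendsto_norm_sub (l := atTop) (S := {p | 0 ∈ A p})
    (x := fun k => x (k + 2)) ⟨z, hz⟩
    (fun z hz => ((hdescent hz).exists_tendsto_norm_sub hα hκ).imp
      fun _ hL => hL.comp (tendsto_add_atTop_nat 2))
    fun U p hU => h.zero_mem_of_weakTendsto hA hξ hγξ hbdd hU
  refine ⟨p, hpA, fun v => (tendsto_add_atTop_iff_nat 2).1 (hp v), ?_⟩
  have hsξ : Tendsto (fun k => s • ξ k) atTop (nhds 0) := by
    simpa only [smul_zero] using hξ.const_smul s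
  simpa only [← h.eq_add_smul, add_zero] using hp.add_tendsto hsξ

end RegularizedInertialSeq

end RegularizedInertialProximal

lemma one_div_sub_two_lt_of_two_div_lt {α ε : ℝ} (hα : 2 < α) (hε : 2 / (α - 2) < ε) :
    1 / (α - 2) < α * ((1 + ε) / α ^ 2) := by
  have : 0 < α := two_pos.trans hα
  have hα2 : 0 < α - 2 := sub_pos.2 hα
  calc 1 / (α - 2) = (1 + 2 / (α - 2)) / α := by field_simp; ring
    _ < (1 + ε) / α := by gcongr
    _ = α * ((1 + ε) / α ^ 2) := by field_simp

lemma abs_succ_sub_le_of_eq_mul_sq {f : ℕ → ℝ} {c : ℝ} (hf : ∀ k : ℕ, f k = c * (k : ℝ) ^ 2)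
    {k : ℕ} (hk : 1 ≤ k) : |f (k + 1) - f k| ≤ 3 * |c| * k := by
  have hfactor : f (k + 1) - f k = c * (2 * k + 1) := by
    rw [hf, hf]
    push_cast
    ring
  have hk' : (1 : ℝ) ≤ k := Nat.one_le_cast.2 hk
  rw [hfactor, abs_mul, abs_of_nonneg (by positivity : (0 : ℝ) ≤ 2 * k + 1)]
  linarith [mul_le_mul_of_nonneg_left hk' (abs_nonneg c)]

lemma exists_forall_le_div_of_tendsto_mul {f : ℕ → ℝ} {L : ℝ}
    (hf : Tendsto (fun k : ℕ => (k : ℝ) * f k) atTop (nhds L)) :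
    ∃ C : ℝ, ∀ k, 1 ≤ k → f k ≤ C / (k : ℝ) := by
  obtain ⟨C, hC⟩ := hf.bddAbove_range
  refine ⟨C, fun k hk => (le_div_iff₀' (Nat.cast_pos.2 hk)).2 (hC ⟨k, rfl⟩)⟩

theorem RIPA_convergence_general (A : H → Set H) (hA : MaximallyMonotone A)
    (hS : ∃ z : H, (0 : H) ∈ A z)
    (s α ε C : ℝ) (hs : 0 < s) (hα : 2 < α) (hε : 2 / (α - 2) < ε)
    (lam : ℕ → ℝ) (hlam : ∀ k : ℕ, 1 ≤ k → (1 + ε) * (s / α ^ 2) * (k : ℝ) ^ 2 ≤ lam k)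
    (hlam_sub : ∀ k : ℕ, 1 ≤ k → |lam (k + 1) - lam k| ≤ C * k)
    (J : ℕ → H → H) (hJ : ∀ k, 1 ≤ k → IsResolvent A (lam k + s) (J k))
    (x y : ℕ → H)
    (hy : ∀ k, 1 ≤ k → y k = x k + (1 - α / (k : ℝ)) • (x k - x (k - 1)))
    (hx : ∀ k, 1 ≤ k →
      x (k + 1) = (lam k / (lam k + s)) • y k + (s / (lam k + s)) • J k (y k)) :
    Tendsto (fun k : ℕ => (k : ℝ) * ‖x (k + 1) - x k‖) atTop (nhds 0) ∧
      Summable (fun k : ℕ => (k : ℝ) * ‖x k - x (k - 1)‖ ^ 2) ∧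
      ∃ p : H, (0 : H) ∈ A p ∧ WeakTendsto x atTop p ∧ WeakTendsto y atTop p := by
  have hκ := one_div_sub_two_lt_of_two_div_lt hα hε
  have hγ (k : ℕ) : (1 + ε) / α ^ 2 * s * (k + 1) ^ 2 ≤ lam (k + 1) + s - s := by
    simpa only [add_sub_cancel_right, div_mul_eq_mul_div, mul_div_assoc, Nat.cast_add_one] using
      hlam (k + 1) k.succ_pos
  have hγsub (k : ℕ) : |lam (k + 1 + 1) + s - (lam (k + 1) + s)| ≤ C * (k + 1) := by
    simpa only [add_sub_add_right_eq_sub, Nat.cast_add_one] using hlam_sub (k + 1) k.succ_pos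
  have hpos (k : ℕ) (hk : 1 ≤ k) : lam k + s ≠ 0 := by
    have hε0 : 0 < ε := (div_pos two_pos (sub_pos.2 hα)).trans hε
    have hlam0 : 0 ≤ lam k := le_trans (by positivity) (hlam k hk)
    positivity
  have hseq := RegularizedInertialSeq.of_isResolvent hpos hJ hy hx
  obtain ⟨p, hpA, hxp, hyp⟩ := hseq.exists_weakTendsto hA hS hs hα hκ hγ hγsub
  obtain ⟨z, hz⟩ := hS
  have hdescent := hseq.inertialDescent hA.1 hs.le hγ hz
  refine ⟨?_, (summable_nat_add_iff 1).1 ?_, p, hpA, hxp, fun v => ?_⟩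
  · simpa only [norm_smul, Real.norm_natCast, norm_zero] using
      (hdescent.tendsto_smul_velocity hα hκ).norm
  · simpa only [Nat.cast_add_one, Nat.add_sub_cancel] using
      hdescent.summable_mul_norm_velocity_sq hα hκ
  · refine (tendsto_add_atTop_iff_nat 1).1 ?_
    simpa only [eq_extrapolation hy] using hyp v

/-- Convergence of the Regularized Inertial Proximal Algorithm (RIPA): with
`α > 2`, `λ_k = (1+ε)(s/α²)k²`, `ε > 2/(α-2)`, the iterates
`y_k = x_k + (1 - α/k)(x_k - x_{k-1})`,
`x_{k+1} = (λ_k/(λ_k+s)) y_k + (s/(λ_k+s)) (I + (λ_k+s)A)⁻¹(y_k)` satisfy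
`‖x_{k+1}-x_k‖ = O(1/k)`, `∑ k‖x_k - x_{k-1}‖² < ∞`, and `(x_k)`, `(y_k)`
converge weakly to a common zero of `A`. -/
theorem RIPA_convergence (A : H → Set H) (hA : MaximallyMonotone A)
    (hS : ∃ z : H, (0 : H) ∈ A z)
    (s α ε : ℝ) (hs : 0 < s) (hα : 2 < α) (hε : 2 / (α - 2) < ε)
    (lam : ℕ → ℝ) (hlam : ∀ k : ℕ, lam k = (1 + ε) * (s / α ^ 2) * (k : ℝ) ^ 2)
    (J : ℝ → H → H) (hJ : ∀ l : ℝ, 0 < l → IsResolvent A l (J l))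
    (x y : ℕ → H)
    (hy : ∀ k, 1 ≤ k → y k = x k + (1 - α / (k : ℝ)) • (x k - x (k - 1)))
    (hx : ∀ k, 1 ≤ k → x (k + 1) =
      (lam k / (lam k + s)) • y k + (s / (lam k + s)) • J (lam k + s) (y k)) :
    (∃ C : ℝ, ∀ k, 1 ≤ k → ‖x (k + 1) - x k‖ ≤ C / (k : ℝ)) ∧
      Summable (fun k : ℕ => (k : ℝ) * ‖x k - x (k - 1)‖ ^ 2) ∧
      ∃ p : H, (0 : H) ∈ A p ∧
        (∀ v : H, Tendsto (fun k => ⟪x k, v⟫) atTop (nhds ⟪p, v⟫)) ∧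
        (∀ v : H, Tendsto (fun k => ⟪y k, v⟫) atTop (nhds ⟪p, v⟫)) := by
  have hpos (k : ℕ) : 0 < lam k + s := by
    have hε0 : 0 < ε := (div_pos two_pos (sub_pos.2 hα)).trans hε
    rw [hlam]
    positivity
  obtain ⟨hrate, hsum, p, hpA, hxp, hyp⟩ := RIPA_convergence_general A hA hS s α ε _ hs hα hε lam
    (fun k _ => (hlam k).ge) (fun _ => abs_succ_sub_le_of_eq_mul_sq hlam) (fun k => J (lam k + s))
    (fun k _ => hJ _ (hpos k)) x y hy hx
  exact ⟨exists_forall_le_div_of_tendsto_mul hrate, hsum, p, hpA, hxp, hyp⟩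
end
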